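/- In the critical-execution setting (a recoverable wait-free binary consensus algorithm for the n processes, a configuration C, an integer z ≥ 1, and α ∈ 𝓔*_z(C) critical with respect to 𝓔*_z(C)), let O be the object that every process is poised to access in Cα, and suppose p_{n−1} is on team 1−v in Cα for some v ∈ {0,1}. If there exist a process p_i on team v in Cα, a process p_j on team 1−v in Cα, a schedule R_i ∈ 𝒮(𝒫 − {p_i}), and a schedule R_j ∈ 𝒮(𝒫 − {p_j}) such that value(O, Cα p_iR_i) = value(O, Cα p_jR_j), then p_j = p_{n−1} and R_j = ⟨⟩. -/

import Mathlib

namespace RecoverableConsensus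

/-- A deterministic object type: a set of values, operations and responses together with a
transition function assigning to each (value, operation) pair a unique response and a unique
resulting value. -/
structure DetType : Type 1 where
  Value : Type
  Op : Type
  Resp : Type
  δ : Value → Op → Resp × Value

/-- A type is readable if it has a Read operation that returns (an injective encoding of)
the current value of the object without changing it. -/
def Readable (T : DetType) : Prop :=
  ∃ (read : T.Op) (ι : T.Value → T.Resp),
    Function.Injective ι ∧ ∀ v, T.δ v read = (ι v, v)

/-- The register type over the value set `V`: the operation `none` is Read (returning the
current value without changing it) and `some v` is Write(v) (changing the value to `v`). -/
def RegisterType (V : Type) : DetType where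
  Value := V
  Op := Option V
  Resp := V
  δ := fun u op =>
    match op with
    | none => (u, u)
    | some v => (v, v)

def IsRegister (T : DetType) : Prop := ∃ V : Type, T = RegisterType V

/-- An event is either a step by a process or a crash of a process. -/
inductive Event (n : ℕ) : Type where
  | step : Fin n → Event n
  | crash : Fin n → Event n
deriving DecidableEq

/-- An algorithm for `n` processes: a collection of shared objects, each with a deterministic
type and an initial value, and for each process a deterministic state machine with an initial
state depending on the process's binary input.  Each state determines the process's next step
(`pending`: an operation applied to a designated object, or `none` for a no-op); the state
reached after a step is determined by the current state and the response received (`next`).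
`output i s = some v` means that `s` is an output state of process `i` for the value `v`;
processes in output states take only no-op steps. -/
structure Algorithm (n : ℕ) : Type 1 where
  ObjIdx : Type
  objType : ObjIdx → DetType
  objInit : (o : ObjIdx) → (objType o).Value
  PState : Fin n → Type
  init : (i : Fin n) → Bool → PState i
  pending : (i : Fin n) → PState i → Option ((o : ObjIdx) × (objType o).Op)
  next : (i : Fin n) → PState i → (o : ObjIdx) → (objType o).Resp → PState i
  output : (i : Fin n) → PState i → Option Bool
  output_noop : ∀ i s, output i s ≠ none → pending i s = none

/-- A configuration assigns a state to each process and a value to each object. -/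
structure Config {n : ℕ} (A : Algorithm n) : Type where
  pstate : (i : Fin n) → A.PState i
  oval : (o : A.ObjIdx) → (A.objType o).Value

variable {n : ℕ}

/-- The effect of one event on a configuration.  A crash of `p_i` resets `p_i` to its initial
state (for its input) and leaves all object values unchanged; a step of `p_i` applies its
pending operation (if any) to the designated object, receiving the response determined by the
type's transition function. -/
noncomputable def applyEvent (A : Algorithm n) (input : Fin n → Bool) (C : Config A) :
    Event n → Config A
  | .crash i => { C with pstate := Function.update C.pstate i (A.init i (input i)) }
  | .step i =>
    letI : DecidableEq A.ObjIdx := Classical.decEq _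
    match A.pending i (C.pstate i) with
    | none => C
    | some ⟨o, op⟩ =>
      { pstate := Function.update C.pstate i
          (A.next i (C.pstate i) o ((A.objType o).δ (C.oval o) op).1),
        oval := Function.update C.oval o ((A.objType o).δ (C.oval o) op).2 }

/-- Since the algorithm is deterministic, a finite execution from `C` is determined by its
schedule, i.e. its list of events; `run A input C σ` is the configuration `Cσ` reached by
applying the events of `σ` in order from `C`. -/
noncomputable def run (A : Algorithm n) (input : Fin n → Bool) (C : Config A) :
    List (Event n) → Config A
  | [] => C
  | e :: σ => run A input (applyEvent A input C e) σ

/-- The initial configuration: every process in its initial state, every object at its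
initial value. -/
def initConfig (A : Algorithm n) (input : Fin n → Bool) : Config A :=
  ⟨fun i => A.init i (input i), A.objInit⟩

/-- Process `i` has decided `v` in `Cσ`: at some point along the execution `σ` from `C`,
process `i` was in an output state for `v`. -/
def HasDecided (A : Algorithm n) (input : Fin n → Bool) (C : Config A)
    (σ : List (Event n)) (i : Fin n) (v : Bool) : Prop :=
  ∃ τ, τ <+: σ ∧ A.output i ((run A input C τ).pstate i) = some v

def CrashFree (σ : List (Event n)) : Prop := ∀ i : Fin n, Event.crash i ∉ σ

/-- The first `k` events of an infinite execution. -/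
def initSeg (e : ℕ → Event n) (k : ℕ) : List (Event n) := (List.range k).map e

/-- Agreement: in every execution no two processes decide different values. -/
def Agreement (A : Algorithm n) : Prop :=
  ∀ (input : Fin n → Bool) (σ : List (Event n)) (i j : Fin n) (v w : Bool),
    HasDecided A input (initConfig A input) σ i v →
    HasDecided A input (initConfig A input) σ j w → v = w

/-- Validity: every decided value is the input of some process. -/
def Validity (A : Algorithm n) : Prop :=
  ∀ (input : Fin n → Bool) (σ : List (Event n)) (i : Fin n) (v : Bool),
    HasDecided A input (initConfig A input) σ i v → ∃ j, input j = v

/-- Recoverable wait-freedom: every process, starting from its initial state, either crashes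
or decides within a finite number of its own steps.  Equivalently: in every infinite execution
in which process `i` starts at (or is reset by a crash to) its initial state, takes infinitely
many steps and crashes only finitely often, it eventually reaches an output state. -/
def RecWaitFree (A : Algorithm n) : Prop :=
  ∀ (input : Fin n → Bool) (C : Config A) (e : ℕ → Event n) (i : Fin n),
    (C.pstate i = A.init i (input i) ∨ ∃ k, e k = Event.crash i) →
    (∀ m, ∃ k, m ≤ k ∧ e k = Event.step i) →
    (∃ m, ∀ k, m ≤ k → e k ≠ Event.crash i) →
    ∃ (k : ℕ) (v : Bool), A.output i ((run A input C (initSeg e k)).pstate i) = some v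

/-- A recoverable wait-free binary consensus algorithm. -/
def SolvesRecConsensus (A : Algorithm n) : Prop :=
  Agreement A ∧ Validity A ∧ RecWaitFree A

/-- Agreement restricted to crash-free executions. -/
def AgreementCF (A : Algorithm n) : Prop :=
  ∀ (input : Fin n → Bool) (σ : List (Event n)), CrashFree σ →
    ∀ (i j : Fin n) (v w : Bool),
      HasDecided A input (initConfig A input) σ i v →
      HasDecided A input (initConfig A input) σ j w → v = w

/-- Validity restricted to crash-free executions. -/
def ValidityCF (A : Algorithm n) : Prop :=
  ∀ (input : Fin n → Bool) (σ : List (Event n)), CrashFree σ →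
    ∀ (i : Fin n) (v : Bool),
      HasDecided A input (initConfig A input) σ i v → ∃ j, input j = v

/-- Wait-freedom: in crash-free executions, every process that takes infinitely many steps
decides. -/
def WaitFree (A : Algorithm n) : Prop :=
  ∀ (input : Fin n → Bool) (e : ℕ → Event n),
    (∀ (k : ℕ) (i : Fin n), e k ≠ Event.crash i) →
    ∀ i : Fin n, (∀ m, ∃ k, m ≤ k ∧ e k = Event.step i) →
    ∃ (k : ℕ) (v : Bool),
      A.output i ((run A input (initConfig A input) (initSeg e k)).pstate i) = some v

/-- A wait-free binary consensus algorithm (for the model in which crashes are permanent,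
i.e. only crash-free executions are relevant). -/
def SolvesWFConsensus (A : Algorithm n) : Prop :=
  AgreementCF A ∧ ValidityCF A ∧ WaitFree A

/-- The number of crashes of process `i` in `σ`. -/
def crashCount (i : Fin n) (σ : List (Event n)) : ℕ :=
  (σ.filter fun e => decide (e = Event.crash i)).length

def isStepBelow (i : Fin n) : Event n → Bool
  | .step j => decide (j < i)
  | .crash _ => false

/-- The total number of steps taken by processes `p_0, …, p_{i-1}` in `σ`. -/
def stepsBelow (i : Fin n) (σ : List (Event n)) : ℕ := (σ.filter (isStepBelow i)).length

/-- The crash bound: for every process `p_i`, the number of crashes of `p_i` is at most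
`z·n` times the total number of steps of `p_0, …, p_{i-1}` (for `i = 0` this says that `p_0`
never crashes). -/
def EMem (z : ℕ) (σ : List (Event n)) : Prop :=
  ∀ i : Fin n, crashCount i σ ≤ z * n * stepsBelow i σ

/-- `𝓔_z`: executions satisfying the crash bound. -/
def ESet (n z : ℕ) : Set (List (Event n)) := { σ | EMem z σ }

/-- `𝓔*_z`: executions satisfying the crash bound in every prefix. -/
def EStarSet (n z : ℕ) : Set (List (Event n)) := { σ | ∀ τ, τ <+: σ → EMem z τ }

/-- `e` is an event by a process in `P`. -/
def eventBy (P : Set (Fin n)) : Event n → Prop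
  | .step i => i ∈ P
  | .crash i => i ∈ P

/-- The set of processes `P` is `v`-univalent in the execution `α` from `C` with respect to
the set of executions `𝒜`. -/
def VUnivalentIn (A : Algorithm n) (input : Fin n → Bool) (C : Config A)
    (𝒜 : Set (List (Event n))) (P : Set (Fin n)) (α : List (Event n)) (v : Bool) : Prop :=
  α ∈ 𝒜 ∧ ∀ β : List (Event n), (∀ e ∈ β, eventBy P e) → (α ++ β) ∈ 𝒜 →
    ∀ (i : Fin n) (w : Bool), HasDecided A input C (α ++ β) i w → w = v

/-- The set of processes `P` is bivalent in the execution `α` from `C` with respect to `𝒜`. -/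
def BivalentIn (A : Algorithm n) (input : Fin n → Bool) (C : Config A)
    (𝒜 : Set (List (Event n))) (P : Set (Fin n)) (α : List (Event n)) : Prop :=
  ∀ v : Bool, ∃ β : List (Event n), (∀ e ∈ β, eventBy P e) ∧ (α ++ β) ∈ 𝒜 ∧
    ∃ i : Fin n, HasDecided A input C (α ++ β) i v

/-- `P` is univalent in `α` with respect to `𝒜`: `v`-univalent for some `v`. -/
def UnivalentIn (A : Algorithm n) (input : Fin n → Bool) (C : Config A)
    (𝒜 : Set (List (Event n))) (P : Set (Fin n)) (α : List (Event n)) : Prop :=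
  ∃ v : Bool, VUnivalentIn A input C 𝒜 P α v

/-- `α ∈ 𝒜` is critical with respect to `𝒜`: `α` is bivalent with respect to `𝒜` and every
nonempty extension of `α` inside `𝒜` is univalent with respect to `𝒜`. -/
def Critical (A : Algorithm n) (input : Fin n → Bool) (C : Config A)
    (𝒜 : Set (List (Event n))) (α : List (Event n)) : Prop :=
  α ∈ 𝒜 ∧ BivalentIn A input C 𝒜 Set.univ α ∧
  ∀ β : List (Event n), β ≠ [] → (α ++ β) ∈ 𝒜 → UnivalentIn A input C 𝒜 Set.univ (α ++ β)

/-- Process `i` is on team `v` in `Cα` (with respect to `𝒜`): `α p_i` is `v`-univalent. -/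
def OnTeam (A : Algorithm n) (input : Fin n → Bool) (C : Config A)
    (𝒜 : Set (List (Event n))) (α : List (Event n)) (i : Fin n) (v : Bool) : Prop :=
  VUnivalentIn A input C 𝒜 Set.univ (α ++ [Event.step i]) v

/-- Process `i` is poised to apply an operation to object `O` in configuration `C`. -/
def PoisedAt (A : Algorithm n) (C : Config A) (i : Fin n) (O : A.ObjIdx) : Prop :=
  ∃ op, A.pending i (C.pstate i) = some ⟨O, op⟩

/-- `σ ∈ 𝒮(P)`: a crash-free schedule in which each process of `P` takes at most one step
and no other process takes a step. -/
def IsSched (P : Set (Fin n)) (σ : List (Event n)) : Prop :=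
  ∃ l : List (Fin n), l.Nodup ∧ (∀ j ∈ l, j ∈ P) ∧ σ = l.map Event.step

/-- The schedule `λ_k = c_k c_{k+1} ⋯ c_{n-1}`. -/
def lambdaSched (n k : ℕ) : List (Event n) :=
  ((List.finRange n).filter fun j => decide (k ≤ j.val)).map Event.crash

/-- `U_v`: the set of values of object `O` reachable from `Dα` by a schedule in `𝒮(𝒫)`
whose first process is on team `v`. -/
def USetCfg (A : Algorithm n) (input : Fin n → Bool) (D : Config A)
    (𝒜 : Set (List (Event n))) (α : List (Event n)) (O : A.ObjIdx) (v : Bool) :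
    Set (A.objType O).Value :=
  { w | ∃ (j : Fin n) (σ : List (Event n)), OnTeam A input D 𝒜 α j v ∧
        IsSched {k : Fin n | k ≠ j} σ ∧
        w = (run A input D (α ++ Event.step j :: σ)).oval O }

/-- The configuration `Dα` is `v`-hiding. -/
def VHiding (A : Algorithm n) (input : Fin n → Bool) (D : Config A)
    (𝒜 : Set (List (Event n))) (α : List (Event n)) (O : A.ObjIdx) (v : Bool) : Prop :=
  USetCfg A input D 𝒜 α O false ∩ USetCfg A input D 𝒜 α O true = ∅ ∧
  (run A input D α).oval O ∈ USetCfg A input D 𝒜 α O v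

/-- The configuration `Dα` is `n`-recording. -/
def NRecordingCfg (A : Algorithm n) (input : Fin n → Bool) (D : Config A)
    (𝒜 : Set (List (Event n))) (α : List (Event n)) (O : A.ObjIdx) : Prop :=
  USetCfg A input D 𝒜 α O false ∩ USetCfg A input D 𝒜 α O true = ∅ ∧
  ∀ v : Bool, (run A input D α).oval O ∈ USetCfg A input D 𝒜 α O v →
    ∃! j : Fin n, OnTeam A input D 𝒜 α j (!v)

/-- Apply the operations `o i` of the processes listed in `σ`, in order, to an object of type
`T`, starting from the value `u`. -/
def applyOps (T : DetType) (o : Fin n → T.Op) : T.Value → List (Fin n) → T.Value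
  | u, [] => u
  | u, i :: σ => applyOps T o (T.δ u (o i)).2 σ

/-- `U_x`: the set of values obtainable by applying the operations of the processes of a
duplicate-free schedule whose first process is on team `x` to an object with initial value
`u`. -/
def UVals (T : DetType) (o : Fin n → T.Op) (u : T.Value) (team : Fin n → Bool) (x : Bool) :
    Set T.Value :=
  { v | ∃ (i : Fin n) (σ : List (Fin n)), team i = x ∧ (i :: σ).Nodup ∧
        v = applyOps T o u (i :: σ) }

/-- A deterministic type `T` is `n`-recording. -/
def NRecording (n : ℕ) (T : DetType) : Prop :=
  ∃ (u : T.Value) (team : Fin n → Bool) (o : Fin n → T.Op),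
    (∀ x : Bool, ∃ i, team i = x) ∧
    (UVals T o u team false ∩ UVals T o u team true = ∅) ∧
    (∀ x : Bool, u ∈ UVals T o u team x → ∃! i, team i = !x)

end RecoverableConsensus

/-!
Suppose that `α p_i R_i` and `α p_j R_j` leave every object with the same value, and that each of
`p_i R_i` and `p_j R_j` contains a step of a process below `p`. Those steps pay for a crash of `p`
after either execution. After the crash, `p` is in its initial state and cannot distinguish the two
configurations, so its solo run, which decides by recoverable wait-freedom, decides the same value
in both: `p_i` and `p_j` are on the same team.

For `p = p_{n-1}`, the process `p_i` is itself below `p`, since it is on the other team. If `p_j` is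
on the other team from `p_i`, then no step of `p_j R_j` is by a process below `p_{n-1}`, that is,
`p_j R_j` consists of the single step of `p_{n-1}`. Equality of the values of `O` suffices, because
no other object is accessed.
-/

namespace RecoverableConsensus

variable {n : ℕ} {A : Algorithm n} {input : Fin n → Bool} {C D : Config A} {O : A.ObjIdx}
  {𝒜 : Set (List (Event n))} {P : Set (Fin n)} {α β σ τ : List (Event n)} {z : ℕ}
  {i j p q : Fin n} {v w : Bool}

lemma run_append (A : Algorithm n) (input : Fin n → Bool) (C : Config A) (σ τ : List (Event n)) :
    run A input C (σ ++ τ) = run A input (run A input C σ) τ := by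
  induction σ generalizing C with
  | nil => rfl
  | cons e _ ih => exact ih _

/-- `C` and `D` are indistinguishable to the processes in `P`: every object has the same value, and
every process of `P` the same state, in both. All objects count, not only those that `P` accesses
next. -/
def IndistinguishableTo (P : Set (Fin n)) (C D : Config A) : Prop :=
  C.oval = D.oval ∧ ∀ p ∈ P, C.pstate p = D.pstate p

lemma IndistinguishableTo.applyEvent_of_eventBy (h : IndistinguishableTo P C D) {e : Event n}
    (he : eventBy P e) :
    IndistinguishableTo P (applyEvent A input C e) (applyEvent A input D e) := by
  obtain ⟨hoval, hstate⟩ := h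
  cases e with
  | crash q =>
    refine ⟨hoval, fun p hp => ?_⟩
    by_cases hpq : p = q
    · subst hpq; simp [applyEvent]
    · simp [applyEvent, hpq, hstate p hp]
  | step q =>
    simp only [applyEvent, hstate q he, hoval]
    split
    · exact ⟨hoval, hstate⟩
    · refine ⟨rfl, fun p hp => ?_⟩
      by_cases hpq : p = q
      · subst hpq; simp
      · simp [hpq, hstate p hp]

lemma IndistinguishableTo.run_of_eventBy (h : IndistinguishableTo P C D)
    (hσ : ∀ e ∈ σ, eventBy P e) : IndistinguishableTo P (run A input C σ) (run A input D σ) := by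
  induction σ generalizing C D with
  | nil => exact h
  | cons e σ ih =>
    rw [List.forall_mem_cons] at hσ
    exact ih (h.applyEvent_of_eventBy hσ.1) hσ.2

lemma indistinguishableTo_applyEvent_crash (h : C.oval = D.oval) :
    IndistinguishableTo {p} (applyEvent A input C (.crash p)) (applyEvent A input D (.crash p)) :=
  ⟨h, fun q hq => by rw [Set.mem_singleton_iff.1 hq]; simp [applyEvent]⟩

lemma pstate_run_crash_cons_replicate_step_congr (h : C.oval = D.oval) (k : ℕ) :
    (run A input C (.crash p :: .replicate k (.step p))).pstate p =
      (run A input D (.crash p :: .replicate k (.step p))).pstate p := by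
  have hsolo : ∀ e ∈ List.replicate k (Event.step p), eventBy {p} e := fun e he => by
    rw [List.eq_of_mem_replicate he]; exact Set.mem_singleton p
  exact ((indistinguishableTo_applyEvent_crash h).run_of_eventBy hsolo).2 p rfl

lemma RecWaitFree.exists_output_run_replicate_step (hA : RecWaitFree A)
    (hC : C.pstate p = A.init p (input p)) :
    ∃ k v, A.output p ((run A input C (.replicate k (.step p))).pstate p) = some v := by
  simpa [initSeg, List.map_const'] using
    hA input C (fun _ => .step p) p (.inl hC) (fun m => ⟨m, le_rfl, rfl⟩) ⟨0, by simp⟩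

lemma RecWaitFree.exists_output_run_crash_cons_replicate_step (hA : RecWaitFree A)
    (input : Fin n → Bool) (C : Config A) (p : Fin n) :
    ∃ k v, A.output p ((run A input C (.crash p :: .replicate k (.step p))).pstate p) = some v :=
  hA.exists_output_run_replicate_step (C := applyEvent A input C (.crash p)) (by simp [applyEvent])

lemma applyEvent_step_pstate_of_ne (h : q ≠ p) :
    (applyEvent A input C (.step p)).pstate q = C.pstate q := by
  simp only [applyEvent]
  split <;> simp [h]

lemma PoisedAt.applyEvent_step_of_ne (hq : PoisedAt A C q O) (h : q ≠ p) :
    PoisedAt A (applyEvent A input C (.step p)) q O := by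
  rwa [PoisedAt, applyEvent_step_pstate_of_ne h]

lemma PoisedAt.applyEvent_step_oval_of_ne (hp : PoisedAt A C p O) {o : A.ObjIdx} (h : o ≠ O) :
    (applyEvent A input C (.step p)).oval o = C.oval o := by
  obtain ⟨op, hop⟩ := hp
  simp [applyEvent, hop, h]

lemma IsSched.cons (hσ : IsSched {k | k ≠ i} σ) : IsSched Set.univ (.step i :: σ) := by
  obtain ⟨l, hnodup, hl, rfl⟩ := hσ
  exact ⟨i :: l, List.nodup_cons.2 ⟨fun hi => hl i hi rfl, hnodup⟩, by simp, rfl⟩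

lemma CrashFree.step_cons (hσ : CrashFree σ) (i : Fin n) : CrashFree (.step i :: σ) := by
  simpa [CrashFree] using hσ

lemma IsSched.crashFree (hσ : IsSched P σ) : CrashFree σ := by
  obtain ⟨l, -, -, rfl⟩ := hσ
  simp [CrashFree]

lemma IsSched.exists_step_mem (hσ : IsSched P σ) (hne : σ ≠ []) : ∃ q ∈ P, .step q ∈ σ := by
  obtain ⟨l, -, hl, rfl⟩ := hσ
  obtain ⟨q, hq⟩ := List.exists_mem_of_ne_nil l (by simpa using hne)
  exact ⟨q, hl q hq, List.mem_map_of_mem hq⟩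

lemma IsSched.run_oval_of_ne (hσ : IsSched P σ) (hP : ∀ p ∈ P, PoisedAt A C p O) {o : A.ObjIdx}
    (ho : o ≠ O) : (run A input C σ).oval o = C.oval o := by
  obtain ⟨l, hnodup, hl, rfl⟩ := hσ
  replace hP : ∀ p ∈ l, PoisedAt A C p O := fun p hp => hP p (hl p hp)
  clear hl
  induction l generalizing C with
  | nil => rfl
  | cons p l ih =>
    rw [List.nodup_cons] at hnodup
    rw [List.forall_mem_cons] at hP
    have hpoised : ∀ q ∈ l, PoisedAt A (applyEvent A input C (.step p)) q O := fun q hq =>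
      (hP.2 q hq).applyEvent_step_of_ne (ne_of_mem_of_not_mem hq hnodup.1)
    exact (ih hnodup.2 hpoised).trans (hP.1.applyEvent_step_oval_of_ne ho)

lemma IsSched.run_oval_eq (hσ : IsSched P σ) (hτ : IsSched P τ) (hP : ∀ p ∈ P, PoisedAt A C p O)
    (hO : (run A input C σ).oval O = (run A input C τ).oval O) :
    (run A input C σ).oval = (run A input C τ).oval := by
  funext o
  by_cases ho : o = O
  · subst ho; exact hO
  · rw [hσ.run_oval_of_ne hP ho, hτ.run_oval_of_ne hP ho]

lemma crashCount_append (p : Fin n) (σ τ : List (Event n)) :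
    crashCount p (σ ++ τ) = crashCount p σ + crashCount p τ := by
  simp [crashCount]

lemma stepsBelow_append (p : Fin n) (σ τ : List (Event n)) :
    stepsBelow p (σ ++ τ) = stepsBelow p σ + stepsBelow p τ := by
  simp [stepsBelow]

lemma CrashFree.crashCount_eq_zero (hσ : CrashFree σ) (p : Fin n) : crashCount p σ = 0 := by
  simpa [crashCount] using fun _ he => ne_of_mem_of_not_mem he (hσ p)

lemma stepsBelow_pos (hσ : .step q ∈ σ) (hqp : q < p) : 0 < stepsBelow p σ :=
  List.length_pos_of_mem (List.mem_filter.2 ⟨hσ, by simpa [isStepBelow] using hqp⟩)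

lemma EMem.append_crashFree (hσ : EMem z σ) (hτ : CrashFree τ) : EMem z (σ ++ τ) := fun p => by
  rw [crashCount_append, hτ.crashCount_eq_zero, stepsBelow_append]
  exact (hσ p).trans (Nat.mul_le_mul_left _ (Nat.le_add_right _ _))

lemma EMem.append_crash (hσ : EMem z σ) (hp : crashCount p σ < z * n * stepsBelow p σ) :
    EMem z (σ ++ [.crash p]) := fun q => by
  by_cases hqp : p = q
  · subst hqp
    simpa [crashCount, stepsBelow, isStepBelow] using hp
  · simpa [crashCount, stepsBelow, isStepBelow, hqp] using hσ q

lemma EMem.crashCount_lt_of_step_mem (hz : 0 < z) (hσ : EMem z σ) (hτ : CrashFree τ)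
    (hq : .step q ∈ τ) (hqp : q < p) :
    crashCount p (σ ++ τ) < z * n * stepsBelow p (σ ++ τ) := by
  have hzn : 0 < z * n := Nat.mul_pos hz p.pos
  calc crashCount p (σ ++ τ)
      = crashCount p σ := by rw [crashCount_append, hτ.crashCount_eq_zero, add_zero]
    _ ≤ z * n * stepsBelow p σ := hσ p
    _ < z * n * (stepsBelow p σ + stepsBelow p τ) :=
      Nat.mul_lt_mul_of_pos_left (Nat.lt_add_of_pos_right (stepsBelow_pos hq hqp)) hzn
    _ = z * n * stepsBelow p (σ ++ τ) := by rw [stepsBelow_append]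

lemma eMem_of_mem_EStarSet (hσ : σ ∈ EStarSet n z) : EMem z σ :=
  hσ σ List.prefix_rfl

lemma mem_EStarSet_of_append_mem (hστ : σ ++ τ ∈ EStarSet n z) : σ ∈ EStarSet n z :=
  fun ρ hρ => hστ ρ (hρ.trans (List.prefix_append σ τ))

lemma append_mem_EStarSet_of_crashFree (hσ : σ ∈ EStarSet n z) (hτ : CrashFree τ) :
    σ ++ τ ∈ EStarSet n z := by
  intro ρ hρ
  rcases List.prefix_or_prefix_of_prefix hρ (List.prefix_append σ τ) with hρσ | ⟨ρ', rfl⟩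
  · exact hσ ρ hρσ
  · have hρτ : ρ' <+: τ := (List.prefix_append_right_inj σ).1 hρ
    exact (eMem_of_mem_EStarSet hσ).append_crashFree fun p hp => hτ p (hρτ.subset hp)

lemma append_crash_mem_EStarSet (hz : 0 < z) (hσ : σ ∈ EStarSet n z) (hτ : CrashFree τ)
    (hq : .step q ∈ τ) (hqp : q < p) : σ ++ τ ++ [.crash p] ∈ EStarSet n z := by
  have hστ := append_mem_EStarSet_of_crashFree hσ hτ
  intro ρ hρ
  rcases List.prefix_concat_iff.1 hρ with rfl | hρ
  · exact (eMem_of_mem_EStarSet hστ).append_crash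
      ((eMem_of_mem_EStarSet hσ).crashCount_lt_of_step_mem hz hτ hq hqp)
  · exact hστ ρ hρ

lemma append_crash_cons_replicate_step_mem_EStarSet (hz : 0 < z) (hσ : σ ∈ EStarSet n z)
    (hτ : CrashFree τ) (hq : .step q ∈ τ) (hqp : q < p) (k : ℕ) :
    σ ++ τ ++ .crash p :: .replicate k (.step p) ∈ EStarSet n z := by
  have hsolo : CrashFree (List.replicate k (Event.step p)) := fun r hr => by
    simpa using List.eq_of_mem_replicate hr
  simpa using append_mem_EStarSet_of_crashFree (append_crash_mem_EStarSet hz hσ hτ hq hqp) hsolo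

lemma VUnivalentIn.append (hα : VUnivalentIn A input C 𝒜 P α v) (hβ : ∀ e ∈ β, eventBy P e)
    (hmem : α ++ β ∈ 𝒜) : VUnivalentIn A input C 𝒜 P (α ++ β) v := by
  refine ⟨hmem, fun γ hγ => ?_⟩
  rw [List.append_assoc]
  exact hα.2 (β ++ γ) (List.forall_mem_append.2 ⟨hβ, hγ⟩)

lemma VUnivalentIn.eq_of_output (hα : VUnivalentIn A input C 𝒜 P α v)
    (hβ : ∀ e ∈ β, eventBy P e) (hmem : α ++ β ∈ 𝒜)
    (hw : A.output p ((run A input (run A input C α) β).pstate p) = some w) : w = v :=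
  hα.2 β hβ hmem p w ⟨α ++ β, List.prefix_rfl, by rwa [run_append]⟩

theorem VUnivalentIn.eq_of_run_oval_eq (hA : RecWaitFree A)
    (hσ : VUnivalentIn A input C 𝒜 P σ v) (hτ : VUnivalentIn A input C 𝒜 P τ w) (hp : p ∈ P)
    (hσp : ∀ k, σ ++ .crash p :: .replicate k (.step p) ∈ 𝒜)
    (hτp : ∀ k, τ ++ .crash p :: .replicate k (.step p) ∈ 𝒜)
    (hoval : (run A input C σ).oval = (run A input C τ).oval) : v = w := by
  obtain ⟨k, u, hu⟩ := hA.exists_output_run_crash_cons_replicate_step input (run A input C σ) p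
  have hby : ∀ e ∈ Event.crash p :: .replicate k (.step p), eventBy P e :=
    List.forall_mem_cons.2 ⟨hp, fun e he => by rw [List.eq_of_mem_replicate he]; exact hp⟩
  have huv : u = v := hσ.eq_of_output hby (hσp k) hu
  rw [pstate_run_crash_cons_replicate_step_congr hoval] at hu
  exact huv.symm.trans (hτ.eq_of_output hby (hτp k) hu)

lemma eventBy_univ (e : Event n) : eventBy Set.univ e := by
  cases e <;> trivial

lemma OnTeam.mem_EStarSet (hi : OnTeam A input C (EStarSet n z) α i v) : α ∈ EStarSet n z :=
  mem_EStarSet_of_append_mem hi.1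

lemma OnTeam.vUnivalentIn_append_step_cons (hi : OnTeam A input C (EStarSet n z) α i v)
    (hσ : CrashFree σ) :
    VUnivalentIn A input C (EStarSet n z) Set.univ (α ++ .step i :: σ) v := by
  simpa using VUnivalentIn.append hi (fun e _ => eventBy_univ e)
    (append_mem_EStarSet_of_crashFree hi.1 hσ)

theorem OnTeam.eq_of_run_oval_eq (hA : RecWaitFree A) (hz : 0 < z)
    (hi : OnTeam A input C (EStarSet n z) α i v) (hj : OnTeam A input C (EStarSet n z) α j w)
    (hσ : CrashFree σ) (hτ : CrashFree τ)
    (hσp : ∃ q < p, .step q ∈ Event.step i :: σ) (hτp : ∃ q < p, .step q ∈ Event.step j :: τ)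
    (hoval : (run A input C (α ++ .step i :: σ)).oval = (run A input C (α ++ .step j :: τ)).oval) :
    v = w := by
  obtain ⟨q, hqp, hq⟩ := hσp
  obtain ⟨r, hrp, hr⟩ := hτp
  exact (hi.vUnivalentIn_append_step_cons hσ).eq_of_run_oval_eq hA
    (hj.vUnivalentIn_append_step_cons hτ) (Set.mem_univ p)
    (append_crash_cons_replicate_step_mem_EStarSet hz hi.mem_EStarSet (hσ.step_cons i) hq hqp)
    (append_crash_cons_replicate_step_mem_EStarSet hz hj.mem_EStarSet (hτ.step_cons j) hr hrp)
    hoval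

theorem OnTeam.unique [Nontrivial (Fin n)] (hA : RecWaitFree A) (hz : 0 < z)
    (hv : OnTeam A input C (EStarSet n z) α i v) (hw : OnTeam A input C (EStarSet n z) α i w) :
    v = w := by
  obtain ⟨q, p, hqp⟩ := exists_pair_lt (Fin n)
  have hq : CrashFree [Event.step q] := by simp [CrashFree]
  have hqp' : ∃ r < p, .step r ∈ [Event.step i, .step q] := ⟨q, hqp, by simp⟩
  exact hv.eq_of_run_oval_eq hA hz hw hq hq hqp' hqp' rfl

end RecoverableConsensus

open RecoverableConsensus in
theorem same_value_restriction_general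
    {n : ℕ} (hn : 2 ≤ n) {A : Algorithm n} (hA : RecWaitFree A)
    {input : Fin n → Bool} {C : Config A} {z : ℕ} (hz : 1 ≤ z) {α : List (Event n)}
    {O : A.ObjIdx} (hO : ∀ p : Fin n, PoisedAt A (run A input C α) p O) {v : Bool}
    {last : Fin n} (le_last : IsTop last) (hlast : OnTeam A input C (EStarSet n z) α last (!v))
    {i j : Fin n}
    (hi : OnTeam A input C (EStarSet n z) α i v)
    (hj : OnTeam A input C (EStarSet n z) α j (!v))
    {Ri Rj : List (Event n)}
    (hRi : IsSched {k : Fin n | k ≠ i} Ri) (hRj : IsSched {k : Fin n | k ≠ j} Rj)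
    (hval : (run A input C (α ++ Event.step i :: Ri)).oval O =
            (run A input C (α ++ Event.step j :: Rj)).oval O) :
    j = last ∧ Rj = [] := by
  have i_lt_last : i < last := by
    have := Fin.nontrivial_iff_two_le.2 hn
    exact (le_last i).lt_of_ne fun h => Bool.self_ne_not v (hi.unique hA hz (h ▸ hlast))
  have oval_eq : (run A input C (α ++ .step i :: Ri)).oval =
      (run A input C (α ++ .step j :: Rj)).oval := by
    rw [run_append, run_append] at hval ⊢
    exact hRi.cons.run_oval_eq hRj.cons (fun p _ => hO p) hval
  have eq_last (q : Fin n) (hq : .step q ∈ Event.step j :: Rj) : q = last := by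
    refine (le_last q).eq_of_not_lt fun q_lt_last => Bool.self_ne_not v ?_
    exact hi.eq_of_run_oval_eq hA hz hj hRi.crashFree hRj.crashFree
      ⟨i, i_lt_last, by simp⟩ ⟨q, q_lt_last, hq⟩ oval_eq
  have j_eq_last : j = last := eq_last j (by simp)
  refine ⟨j_eq_last, by_contra fun hne => ?_⟩
  obtain ⟨q, q_ne_j, hq⟩ := hRj.exists_step_mem hne
  exact q_ne_j ((eq_last q (List.mem_cons_of_mem _ hq)).trans j_eq_last.symm)

open RecoverableConsensus in
/-- In the critical-execution setting, with `O` the object every process is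
poised to access in `Cα` and `p_{n-1}` on team `¬v`: if `p_i` is on team `v`, `p_j` is on
team `¬v`, `R_i ∈ 𝒮(𝒫 - {p_i})`, `R_j ∈ 𝒮(𝒫 - {p_j})` and
`value(O, Cα p_i R_i) = value(O, Cα p_j R_j)`, then `p_j = p_{n-1}` and `R_j = ⟨⟩`. -/
theorem same_value_restriction
    (n : ℕ) (hn : 2 ≤ n) (A : Algorithm n) (hA : SolvesRecConsensus A)
    (input : Fin n → Bool) (C : Config A) (z : ℕ) (hz : 1 ≤ z)
    (α : List (Event n)) (hα : α ∈ EStarSet n z)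
    (hcrit : Critical A input C (EStarSet n z) α)
    (O : A.ObjIdx) (hO : ∀ p : Fin n, PoisedAt A (run A input C α) p O)
    (v : Bool)
    (hlast : OnTeam A input C (EStarSet n z) α ⟨n - 1, by omega⟩ (!v))
    (i j : Fin n)
    (hi : OnTeam A input C (EStarSet n z) α i v)
    (hj : OnTeam A input C (EStarSet n z) α j (!v))
    (Ri Rj : List (Event n))
    (hRi : IsSched {k : Fin n | k ≠ i} Ri) (hRj : IsSched {k : Fin n | k ≠ j} Rj)
    (hval : (run A input C (α ++ Event.step i :: Ri)).oval O =
            (run A input C (α ++ Event.step j :: Rj)).oval O) :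
    j = (⟨n - 1, by omega⟩ : Fin n) ∧ Rj = [] :=
  same_value_restriction_general hn hA.2.2 hz hO (fun q => Nat.le_sub_one_of_lt q.isLt) hlast
    hi hj hRi hRj hval
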